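/- Let n ≥ 1, let λ = (λ_1,…,λ_ℓ) be a partition of n, and let N ≥ 1 be a number of variables. Then, as an identity of symmetric polynomials in N variables with rational coefficients, (1/n!) · Σ_{π ∈ S_n} d_λ(π) · p_{λ(π)} = h_λ, where h_λ = Π_{i=1}^ℓ h_{λ_i}. -/

import Mathlib

/-- `dPart λ π` is the number of ordered tuples `(A_1, …, A_l)` of pairwise disjoint
subsets of `{0, …, n-1}` with union everything, `|A_i| = λ_i`, and each `A_i`
invariant under the permutation `π`. -/
noncomputable def dPart {n l : ℕ} (lam : Fin l → ℕ) (π : Equiv.Perm (Fin n)) : ℕ :=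
  Nat.card {A : Fin l → Finset (Fin n) //
    (∀ i j, i ≠ j → Disjoint (A i) (A j)) ∧
    (Finset.univ.biUnion A = Finset.univ) ∧
    (∀ i, (A i).card = lam i) ∧
    (∀ i, (A i).image π = A i)}

/-- `pPerm N π = p_{λ(π)}`, the product of the power sum polynomials `p_k` in `N`
variables over the cycle lengths `k` (including fixed points) of the permutation `π`. -/
noncomputable def pPerm (N : ℕ) {n : ℕ} (π : Equiv.Perm (Fin n)) :
    MvPolynomial (Fin N) ℚ :=
  ((Equiv.Perm.partition π).parts.map (fun k => MvPolynomial.psum (Fin N) ℚ k)).prod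

/-!
In the variables `x_j y_i`, compare the coefficients of `y^λ` on the two sides of
`∑_π p_{λ(π)} = n! h_n`. Since `p_k(xy) = p_k(x) p_k(y)`, and `p_{λ(π)}(y)` is the sum of
`∏_a y_{c(a)}` over the `π`-invariant colourings `c`, the left side gives `∑_π d_λ(π) p_{λ(π)}(x)`.
Since `∏_{i,j} (1 - x_j y_i t)⁻¹ = ∏_i H(y_i t)` with `H(t) = ∏_j (1 - x_j t)⁻¹ = ∑_m h_m(x) t^m`,
the right side gives `n! h_λ(x)`.

The identity `∑_π p_{λ(π)} = n! h_n` is a double count of the pairs of a permutation and a colouring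
invariant under it: there are `n! / ∏_k d_k!` colourings using each colour `k` exactly `d_k` times,
and each of them is invariant under `∏_k d_k!` permutations.
-/

section CycleClass

open Finset Equiv.Perm

/-- The cycles of `π`, fixed points included, encoded as the classes of the relation of lying on a
common cycle. The `π`-invariant functions are the functions on this quotient. -/
abbrev CycleClass {α : Type*} (π : Equiv.Perm α) : Type _ :=
  Quotient (SameCycle.setoid π)

section Representatives

variable {α : Type*} {π : Equiv.Perm α}

lemma sameCycle_out_mk (a : α) : π.SameCycle (⟦a⟧ : CycleClass π).out a :=
  Quotient.mk_out (s := SameCycle.setoid π) a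

lemma mk_eq_iff_sameCycle_out {a : α} {q : CycleClass π} : ⟦a⟧ = q ↔ π.SameCycle q.out a :=
  eq_comm.trans Quotient.eq_mk_iff_out

lemma comp_perm_eq_self_iff [Finite α] {β : Type*} {c : α → β} :
    c ∘ π = c ↔ SameCycle.setoid π ≤ Setoid.ker c := by
  refine ⟨fun h a b hab ↦ ?_, fun h ↦ funext fun a ↦ h (sameCycle_apply_left.2 .rfl)⟩
  obtain ⟨k, rfl⟩ := hab.exists_nat_pow_eq
  have semiconj : Function.Semiconj c π id := congrFun h
  simpa [iterate_eq_pow] using (semiconj.iterate_right k a).symm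

end Representatives

variable {α : Type*} [Fintype α] [DecidableEq α] {π : Equiv.Perm α}

lemma card_filter_out_notMem_support [Fintype (CycleClass π)] :
    #{q : CycleClass π | q.out ∉ π.support} = Fintype.card α - #π.support := by
  rw [← card_compl]
  refine card_nbij' Quotient.out (fun a ↦ ⟦a⟧) ?_ ?_ ?_ ?_
  · intro q hq
    simpa using hq
  · intro a ha
    simpa [(sameCycle_out_mk a).apply_eq_self_iff] using ha
  · exact fun q _ ↦ Quotient.out_eq q
  · exact fun a ha ↦ (sameCycle_out_mk a).eq_of_right (notMem_support.1 (mem_compl.1 ha))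

lemma cycleOf_out_injOn :
    Set.InjOn (fun q : CycleClass π ↦ π.cycleOf q.out) {q | q.out ∈ π.support} :=
  fun _ hq _ hr h ↦
    Quotient.out_equiv_out.1 ((sameCycle_iff_cycleOf_eq_of_mem_support hq hr).2 h)

lemma image_cycleOf_out [Fintype (CycleClass π)] :
    ({q | q.out ∈ π.support} : Finset (CycleClass π)).image (fun q ↦ π.cycleOf q.out) =
      π.cycleFactorsFinset := by
  ext c
  simp only [mem_image, mem_filter_univ]
  refine ⟨fun ⟨q, hq, hc⟩ ↦ hc ▸ cycleOf_mem_cycleFactorsFinset_iff.2 hq, fun hc ↦ ?_⟩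
  obtain ⟨a, ha⟩ := (mem_cycleFactorsFinset_iff.1 hc).1.nonempty_support
  exact ⟨⟦a⟧, (sameCycle_out_mk a).mem_support_iff.2 (mem_cycleFactorsFinset_support_le hc ha),
    (sameCycle_out_mk a).cycleOf_eq.trans (cycle_is_cycleOf ha hc).symm⟩

variable [DecidableEq (CycleClass π)]

lemma card_filter_mk_eq_of_mem_support {q : CycleClass π} (hq : q.out ∈ π.support) :
    #{a | ⟦a⟧ = q} = #(π.cycleOf q.out).support := by
  congr 1
  ext a
  rw [mem_filter_univ, mem_support_cycleOf_iff' (mem_support.1 hq), mk_eq_iff_sameCycle_out]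

lemma card_filter_mk_eq_of_notMem_support {q : CycleClass π} (hq : q.out ∉ π.support) :
    #{a | ⟦a⟧ = q} = 1 := by
  refine card_eq_one.2 ⟨q.out, ?_⟩
  ext a
  rw [mem_filter_univ, mem_singleton, mk_eq_iff_sameCycle_out]
  exact ⟨fun h ↦ (h.eq_of_left (notMem_support.1 hq)).symm, fun h ↦ h ▸ .rfl⟩

variable [Fintype (CycleClass π)]

lemma cycleType_eq_map_card_filter_mk :
    π.cycleType = ({q | q.out ∈ π.support} : Finset (CycleClass π)).val.map
      fun q ↦ #{a | ⟦a⟧ = q} := by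
  have injOn : Set.InjOn (fun q ↦ π.cycleOf q.out)
      (({q | q.out ∈ π.support} : Finset (CycleClass π)) : Set (CycleClass π)) := by
    simpa only [coe_filter_univ] using cycleOf_out_injOn
  rw [cycleType_def, ← image_cycleOf_out, image_val_of_injOn injOn, Multiset.map_map]
  refine Multiset.map_congr rfl fun q hq ↦ ?_
  exact (card_filter_mk_eq_of_mem_support ((mem_filter_univ q).1 hq)).symm

lemma parts_partition_eq_map_card_filter_mk :
    π.partition.parts = (univ : Finset (CycleClass π)).val.map fun q ↦ #{a | ⟦a⟧ = q} := by
  rw [parts_partition, ← card_filter_out_notMem_support, cycleType_eq_map_card_filter_mk,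
    ← Multiset.filter_add_not (fun q ↦ q.out ∈ π.support) univ.val, Multiset.map_add]
  congr 1
  refine (Multiset.eq_replicate.2 ⟨Multiset.card_map _ _, ?_⟩).symm
  simp only [Multiset.mem_map]
  rintro _ ⟨q, hq, rfl⟩
  exact card_filter_mk_eq_of_notMem_support (Multiset.mem_filter.1 hq).2

end CycleClass

section Content

open Finset MvPolynomial
open scoped Nat

/-- The content of a colouring `c`: the number of times each colour is used. As an exponent vector
it records the monomial `∏ a, X (c a)`. -/
noncomputable def content {α κ : Type*} [Fintype α] (c : α → κ) : κ →₀ ℕ :=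
  ∑ a, Finsupp.single (c a) 1

variable {α κ : Type*} [Fintype α]

lemma content_apply [DecidableEq κ] (c : α → κ) (k : κ) : content c k = #{a | c a = k} := by
  simp [content, Finsupp.finsetSum_apply, Finsupp.single_apply]

lemma degree_content (c : α → κ) : (content c).degree = Fintype.card α := by
  simp [content]

lemma prod_X_eq_monomial_content {R : Type*} [CommSemiring R] (c : α → κ) :
    ∏ a, (X (c a) : MvPolynomial κ R) = monomial (content c) 1 :=
  (monomial_sum_one _ _).symm

lemma prod_univ_X_pow {R : Type*} [CommSemiring R] [Fintype κ] (e : κ → ℕ) :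
    ∏ k, (X k : MvPolynomial κ R) ^ e k = monomial (Finsupp.equivFunOnFinite.symm e) 1 := by
  simp [monomial_eq, Finsupp.prod_fintype]

variable [DecidableEq α] [Fintype κ] [DecidableEq κ]

lemma card_perm_comp_eq_self (c : α → κ) :
    #{π : Equiv.Perm α | c ∘ π = c} = ∏ k, (content c k)! := by
  simp_rw [content_apply, ← Fintype.card_subtype]
  exact DomMulAct.stabilizer_card c

lemma card_filter_content_eq {d : κ →₀ ℕ} (hd : d.degree = Fintype.card α) :
    #{c : α → κ | content c = d} = Nat.multinomial univ d := by
  have sum_X_pow : ∑ c : α → κ, monomial (content c) 1 =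
      ∑ k ∈ univ.piAntidiag (Fintype.card α),
        (Nat.multinomial univ k : MvPolynomial κ ℕ) * ∏ i, X i ^ k i := by
    simp_rw [← prod_X_eq_monomial_content, ← Fintype.prod_sum, ← sum_pow_eq_sum_piAntidiag,
      prod_const, card_univ]
  have sum_d : ∑ k, d k = Fintype.card α := by rw [← Finsupp.degree_eq_sum, hd]
  have coeff_d := congrArg (coeff d) sum_X_pow
  simp_rw [prod_univ_X_pow, ← C_eq_coe_nat, C_mul_monomial, coeff_sum, coeff_monomial,
    Equiv.symm_apply_eq] at coeff_d
  simpa [sum_d, Finsupp.equivFunOnFinite] using coeff_d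

lemma sum_card_perm_comp_eq_self {d : κ →₀ ℕ} (hd : d.degree = Fintype.card α) :
    ∑ c : α → κ with content c = d, #{π : Equiv.Perm α | c ∘ π = c} = (Fintype.card α)! := by
  calc ∑ c : α → κ with content c = d, #{π : Equiv.Perm α | c ∘ π = c}
      = ∑ c : α → κ with content c = d, ∏ k, (d k)! :=
        sum_congr rfl fun c hc ↦ by rw [card_perm_comp_eq_self, (mem_filter_univ c).1 hc]
    _ = (∏ k, (d k)!) * Nat.multinomial univ d := by
        rw [sum_const, card_filter_content_eq hd, smul_eq_mul, mul_comm]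
    _ = (Fintype.card α)! := by rw [Nat.multinomial_spec, ← Finsupp.degree_eq_sum, hd]

end Content

section PowerSum

open Finset MvPolynomial

theorem psumPart_partition_eq_sum {α : Type*} [Fintype α] [DecidableEq α] (κ R : Type*)
    [Fintype κ] [DecidableEq κ] [CommSemiring R] (π : Equiv.Perm α) :
    psumPart κ R π.partition = ∑ c : α → κ with c ∘ π = c, ∏ a, X (c a) := by
  classical
  calc psumPart κ R π.partition
      = ∏ q : CycleClass π, ∑ k : κ, X k ^ #{a | ⟦a⟧ = q} := by
        rw [psumPart, parts_partition_eq_map_card_filter_mk, Multiset.map_map]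
        rfl
    _ = ∑ f : CycleClass π → κ, ∏ q, X (f q) ^ #{a | ⟦a⟧ = q} :=
        Fintype.prod_sum _
    _ = ∑ f : CycleClass π → κ, ∏ a, X (f ⟦a⟧) := by
        simp_rw [← prod_const, prod_fiberwise']
    _ = ∑ c : {c : α → κ // c ∘ π = c}, ∏ a, X (c.1 a) :=
        (Fintype.sum_equiv ((Equiv.subtypeEquivRight fun _ ↦ comp_perm_eq_self_iff).trans
          (Setoid.liftEquiv _)) _ _ fun _ ↦ rfl).symm
    _ = ∑ c : α → κ with c ∘ π = c, ∏ a, X (c a) :=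
        (sum_subtype {c : α → κ | c ∘ π = c} mem_filter_univ fun c ↦ ∏ a, X (c a)).symm

lemma coeff_psumPart_partition {α κ : Type*} [Fintype α] [DecidableEq α] [Fintype κ]
    [DecidableEq κ] (R : Type*) [CommSemiring R] (π : Equiv.Perm α) (d : κ →₀ ℕ) :
    coeff d (psumPart κ R π.partition) = #{c : α → κ | content c = d ∧ c ∘ π = c} := by
  simp_rw [psumPart_partition_eq_sum, coeff_sum, prod_X_eq_monomial_content, coeff_monomial,
    sum_boole, filter_filter, and_comm]

lemma aeval_X_psumPart {κ R S : Type*} [Fintype κ] [CommSemiring R] [CommSemiring S]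
    [Algebra R S] {n : ℕ} (μ : n.Partition) :
    aeval (X : κ → MvPolynomial κ S) (psumPart κ R μ) = psumPart κ S μ := by
  have aeval_psum (k : ℕ) : aeval (X : κ → MvPolynomial κ S) (psum κ R k) = psum κ S k := by
    simp [psum]
  simp_rw [psumPart, map_multiset_prod, Multiset.map_map, Function.comp_def, aeval_psum]

lemma aeval_mul_psumPart {σ ι R A : Type*} [Fintype σ] [Fintype ι] [CommSemiring R]
    [CommSemiring A] [Algebra R A] (x : σ → A) (y : ι → A) {n : ℕ} (μ : n.Partition) :
    aeval (fun p : ι × σ ↦ x p.2 * y p.1) (psumPart (ι × σ) R μ) =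
      aeval x (psumPart σ R μ) * aeval y (psumPart ι R μ) := by
  have aeval_psum (k : ℕ) : aeval (fun p : ι × σ ↦ x p.2 * y p.1) (psum (ι × σ) R k) =
      aeval x (psum σ R k) * aeval y (psum ι R k) := by
    simp [psum, mul_pow, Fintype.sum_mul_sum, Fintype.sum_prod_type_right]
  simp_rw [psumPart, map_multiset_prod, Multiset.map_map, Function.comp_def, aeval_psum,
    Multiset.prod_map_mul]

end PowerSum

section CompleteHomogeneous

open Finset MvPolynomial

variable {σ ι R A : Type*} [Fintype σ] [DecidableEq σ] [Fintype ι] [DecidableEq ι]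
  [CommSemiring R] [CommSemiring A] [Algebra R A]

lemma prod_map_X_eq_monomial_toFinsupp {κ R : Type*} [DecidableEq κ] [CommSemiring R]
    (s : Multiset κ) :
    (s.map X).prod = (monomial (Multiset.toFinsupp s) 1 : MvPolynomial κ R) := by
  induction s using Multiset.induction_on with
  | empty => simp
  | cons k s ih =>
    rw [Multiset.map_cons, Multiset.prod_cons, ih, X, monomial_mul, one_mul,
      ← Multiset.singleton_add, Multiset.toFinsupp_add, Multiset.toFinsupp_singleton]

lemma hsymm_eq_sum_monomial (n : ℕ) :
    hsymm σ R n = ∑ d ∈ univ.finsuppAntidiag n, monomial d 1 := by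
  refine sum_bij (fun (s : Sym σ n) _ ↦ Multiset.toFinsupp s.1) ?_ ?_ ?_
    fun s _ ↦ prod_map_X_eq_monomial_toFinsupp s.1
  · intro s _
    rw [mem_finsuppAntidiag]
    exact ⟨(Multiset.sum_count_eq_card fun k _ ↦ mem_univ k).trans s.2, subset_univ _⟩
  · intro s _ t _ h
    exact Sym.ext (Multiset.toFinsupp.injective h)
  · intro d hd
    refine ⟨⟨Finsupp.toMultiset d, ?_⟩, mem_univ _, Finsupp.toMultiset_toFinsupp d⟩
    simpa [Finsupp.sum_fintype] using hd

lemma coeff_hsymm (n : ℕ) (d : σ →₀ ℕ) :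
    coeff d (hsymm σ R n) = if d.degree = n then 1 else 0 := by
  simp [hsymm_eq_sum_monomial, coeff_sum, coeff_monomial, Finsupp.degree_eq_sum]

lemma aeval_hsymm_eq_coeff_prod (x : σ → A) (n : ℕ) :
    aeval x (hsymm σ R n) = PowerSeries.coeff n (∏ j, PowerSeries.mk fun m ↦ x j ^ m) := by
  simp [hsymm_eq_sum_monomial, PowerSeries.coeff_prod, aeval_monomial, Finsupp.prod_fintype]

theorem aeval_mul_hsymm (x : σ → A) (y : ι → A) (n : ℕ) :
    aeval (fun p : ι × σ ↦ x p.2 * y p.1) (hsymm (ι × σ) R n) =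
      ∑ d ∈ univ.finsuppAntidiag n, ∏ i, aeval x (hsymm σ R (d i)) * y i ^ d i := by
  have prod_mk_mul (i : ι) : ∏ j, PowerSeries.mk (fun m ↦ (x j * y i) ^ m) =
      PowerSeries.rescale (y i) (∏ j, PowerSeries.mk fun m ↦ x j ^ m) := by
    simp_rw [map_prod, PowerSeries.rescale_mk, mul_pow, mul_comm]
  rw [aeval_hsymm_eq_coeff_prod, Fintype.prod_prod_type]
  simp_rw [prod_mk_mul, PowerSeries.coeff_prod _ _ univ, PowerSeries.coeff_rescale,
    aeval_hsymm_eq_coeff_prod, mul_comm]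

lemma coeff_sum_prod_C_mul_X_pow (b : ι → ℕ → R) (d : ι →₀ ℕ) :
    coeff d (∑ e ∈ univ.finsuppAntidiag d.degree, ∏ i, C (b i (e i)) * X i ^ e i) =
      ∏ i, b i (d i) := by
  simp [prod_mul_distrib, ← map_prod, prod_univ_X_pow, C_mul_monomial, coeff_sum, coeff_monomial,
    Finsupp.degree_eq_sum]

end CompleteHomogeneous

section SumOverPermutations

open Finset MvPolynomial
open scoped Nat

variable {α σ ι R : Type*} [Fintype α] [DecidableEq α] [Fintype σ] [DecidableEq σ]
  [Fintype ι] [DecidableEq ι] [CommSemiring R]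

theorem sum_psumPart_partition :
    ∑ π : Equiv.Perm α, psumPart σ R π.partition =
      (Fintype.card α)! • hsymm σ R (Fintype.card α) := by
  ext d
  have double_count : ∑ π : Equiv.Perm α, #{c : α → σ | content c = d ∧ c ∘ π = c} =
      ∑ c : α → σ with content c = d, #{π : Equiv.Perm α | c ∘ π = c} := by
    simp_rw [← filter_filter]
    exact sum_card_bipartiteAbove_eq_sum_card_bipartiteBelow
      fun (π : Equiv.Perm α) (c : α → σ) ↦ c ∘ π = c
  simp_rw [coeff_sum, coeff_psumPart_partition, coeff_smul, coeff_hsymm]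
  rw [← Nat.cast_sum, double_count]
  split_ifs with hd
  · rw [sum_card_perm_comp_eq_self hd, nsmul_one]
  · have content_ne (c : α → σ) : content c ≠ d := fun hc ↦ hd (hc ▸ degree_content c)
    simp [content_ne]

theorem sum_aeval_psumPart_mul_aeval_psumPart {A : Type*} [CommSemiring A] [Algebra R A]
    (x : σ → A) (y : ι → A) :
    ∑ π : Equiv.Perm α, aeval x (psumPart σ R π.partition) * aeval y (psumPart ι R π.partition) =
      (Fintype.card α)! • ∑ d ∈ univ.finsuppAntidiag (Fintype.card α),
        ∏ i, aeval x (hsymm σ R (d i)) * y i ^ d i := by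
  simp_rw [← aeval_mul_psumPart, ← map_sum, sum_psumPart_partition, map_nsmul, aeval_mul_hsymm]

lemma aeval_C_X {τ υ R : Type*} [CommSemiring R] (f : MvPolynomial τ R) :
    aeval (fun j ↦ (C (X j) : MvPolynomial υ (MvPolynomial τ R))) f = C f := by
  have := aeval_algebraMap_apply (MvPolynomial υ (MvPolynomial τ R)) (X : τ → MvPolynomial τ R) f
  rwa [aeval_X_left_apply] at this

theorem sum_card_nsmul_psumPart_partition {d : ι →₀ ℕ} (hd : d.degree = Fintype.card α) :
    ∑ π : Equiv.Perm α, #{c : α → ι | content c = d ∧ c ∘ π = c} • psumPart σ R π.partition =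
      (Fintype.card α)! • ∏ i, hsymm σ R (d i) := by
  have coeff_d := congrArg (coeff d) (sum_aeval_psumPart_mul_aeval_psumPart (α := α) (R := R)
    (fun j : σ ↦ C (X j)) (X : ι → MvPolynomial ι (MvPolynomial σ R)))
  simp_rw [aeval_X_psumPart, aeval_C_X, coeff_sum, coeff_C_mul, coeff_psumPart_partition,
    coeff_smul, ← hd, coeff_sum_prod_C_mul_X_pow (fun _ m ↦ hsymm σ R m)] at coeff_d
  simpa only [nsmul_eq_mul', hd] using coeff_d

end SumOverPermutations

section InvariantPartitions

open Finset

variable {α ι : Type*} [Fintype α] [DecidableEq ι]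

lemma filter_eq_injective :
    Function.Injective fun (c : α → ι) (i : ι) ↦ ({a | c a = i} : Finset α) := by
  intro c c' h
  ext a
  have mem_iff := Finset.ext_iff.1 (congrFun h (c a)) a
  simpa [eq_comm] using mem_iff

lemma exists_filter_eq [DecidableEq α] [Fintype ι] {A : ι → Finset α}
    (disjoint : ∀ i j, i ≠ j → Disjoint (A i) (A j)) (cover : univ.biUnion A = univ) :
    ∃ c : α → ι, (fun i ↦ ({a | c a = i} : Finset α)) = A := by
  have exists_mem (a : α) : ∃ i, a ∈ A i := by simpa using cover.ge (mem_univ a)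
  choose c hc using exists_mem
  refine ⟨c, funext fun i ↦ ?_⟩
  ext a
  rw [mem_filter_univ]
  refine ⟨fun h ↦ h ▸ hc a, fun ha ↦ ?_⟩
  by_contra hne
  exact disjoint_left.1 (disjoint _ _ hne) (hc a) ha

lemma forall_image_filter_eq_iff [DecidableEq α] {c : α → ι} {π : Equiv.Perm α} :
    (∀ i, ({a | c a = i} : Finset α).image π = ({a | c a = i} : Finset α)) ↔ c ∘ π = c := by
  refine ⟨fun h ↦ funext fun a ↦ ?_, fun h i ↦ ?_⟩
  · have mem_fiber : π a ∈ ({b | c b = c a} : Finset α) :=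
      h (c a) ▸ mem_image_of_mem π (by simp)
    simpa using mem_fiber
  · refine eq_of_subset_of_card_le (image_subset_iff.2 fun a ha ↦ ?_)
      (card_image_of_injective _ π.injective).ge
    have apply_eq : c (π a) = c a := congrFun h a
    simpa [apply_eq] using ha

lemma content_eq_equivFunOnFinite_symm_iff [Finite ι] {c : α → ι} {e : ι → ℕ} :
    content c = Finsupp.equivFunOnFinite.symm e ↔ ∀ i, #{a | c a = i} = e i := by
  simp [Finsupp.ext_iff, content_apply]

lemma dPart_eq_card {n l : ℕ} (lam : Fin l → ℕ) (π : Equiv.Perm (Fin n)) :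
    dPart lam π =
      #{c : Fin n → Fin l | content c = Finsupp.equivFunOnFinite.symm lam ∧ c ∘ π = c} := by
  rw [← card_image_of_injective _ filter_eq_injective]
  refine Nat.subtype_card _ fun A ↦ ?_
  simp only [mem_image, mem_filter_univ, content_eq_equivFunOnFinite_symm_iff,
    ← forall_image_filter_eq_iff]
  constructor
  · rintro ⟨c, ⟨card_eq, image_eq⟩, rfl⟩
    refine ⟨fun i j hij ↦ disjoint_filter.2 fun a _ hi hj ↦ hij (hi ▸ hj), ?_, card_eq, image_eq⟩
    ext a
    simp
  · rintro ⟨disjoint, cover, card_eq, image_eq⟩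
    obtain ⟨c, rfl⟩ := exists_filter_eq disjoint cover
    exact ⟨c, ⟨card_eq, image_eq⟩, rfl⟩

end InvariantPartitions

open scoped Nat in
theorem average_dPart_psum_eq_hsymm_general {n l : ℕ} {lam : Fin l → ℕ} (hs : ∑ i, lam i = n)
    (σ R : Type*) [Fintype σ] [DecidableEq σ] [CommSemiring R] :
    ∑ π : Equiv.Perm (Fin n), dPart lam π • MvPolynomial.psumPart σ R π.partition =
      n ! • ∏ i, MvPolynomial.hsymm σ R (lam i) := by
  have hd : (Finsupp.equivFunOnFinite.symm lam).degree = Fintype.card (Fin n) := by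
    simpa [Finsupp.degree_eq_sum] using hs
  simpa [dPart_eq_card] using sum_card_nsmul_psumPart_partition (σ := σ) (R := R) hd

/-- For a partition `λ = (λ_1,…,λ_l) ⊢ n`,
`(1/n!) ∑_{π ∈ S_n} d_λ(π) p_{λ(π)} = h_λ = ∏ᵢ h_{λᵢ}`
as symmetric polynomials in `N` variables over `ℚ`. -/
theorem average_dPart_psum_eq_hsymm (n : ℕ) (hn : 1 ≤ n) (l : ℕ)
    (lam : Fin l → ℕ) (ha : Antitone lam) (hp : ∀ i, 0 < lam i)
    (hs : ∑ i, lam i = n) (N : ℕ) (hN : 1 ≤ N) :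
    (1 / (Nat.factorial n : ℚ)) •
      ∑ π : Equiv.Perm (Fin n), (dPart lam π : ℚ) • pPerm N π
      = ∏ i, MvPolynomial.hsymm (Fin N) ℚ (lam i) := by
  rw [one_div, inv_smul_eq_iff₀ (by positivity)]
  simp only [Nat.cast_smul_eq_nsmul]
  exact average_dPart_psum_eq_hsymm_general hs (Fin N) ℚ
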